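/- Let K be an arbitrary field and ℓ a prime. For every v ∈ 𝒱_K, the subgroup 𝔘_v^1 (generated by 1+m_v, −1 and K^{×ℓ}) belongs to 𝒯_K, and the map v ↦ 𝔘_v^1 is a bijection from 𝒱_K onto 𝒯_K. -/

import Mathlib

/-- A subgroup `T ≤ F^×` is rigid if for every `x ∈ F^× \ T` the
subgroup of `F^×/T` generated by the images of `x` and `1 - x` is cyclic. -/
def IsRigid {F : Type*} [Field F] (T : Subgroup Fˣ) : Prop :=
  ∀ x : Fˣ, x ∉ T → ∀ h : (1 : F) - (x : F) ≠ 0,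
    IsCyclic ↥(Subgroup.closure {(QuotientGroup.mk x : Fˣ ⧸ T),
      QuotientGroup.mk (Units.mk0 ((1 : F) - (x : F)) h)})

/-- The subgroup `𝐇(T)`: the intersection of all subgroups `H ≤ F^×` such that (i) `T ≤ H`
and `F^×/H` is cyclic, and (ii) for every `H'` with `T ≤ H'` and `F^×/H'` cyclic, `H ⊓ H'`
is rigid. -/
def Hbold {F : Type*} [Field F] (T : Subgroup Fˣ) : Subgroup Fˣ :=
  sInf {H : Subgroup Fˣ |
    (T ≤ H ∧ IsCyclic (Fˣ ⧸ H)) ∧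
    ∀ H' : Subgroup Fˣ, T ≤ H' → IsCyclic (Fˣ ⧸ H') → IsRigid (H ⊓ H')}

/-- The subgroup `F^{×ℓ}` of `ℓ`-th powers of `F^×`. -/
def powSub (F : Type*) [Field F] (ℓ : ℕ) : Subgroup Fˣ :=
  MonoidHom.range (powMonoidHom ℓ : Fˣ →* Fˣ)

/-- The subgroup `⟨F^{×ℓ}, -1⟩` of `F^×`. -/
def smallSub (F : Type*) [Field F] (ℓ : ℕ) : Subgroup Fˣ :=
  powSub F ℓ ⊔ Subgroup.closure {(-1 : Fˣ)}

/-- `Γ_v = K^×/O_v^×` has no nontrivial `ℓ`-divisible convex subgroup. -/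
def NoLDivConvex {K : Type*} [Field K] (ℓ : ℕ) (O : ValuationSubring K) : Prop :=
  ∀ D : Subgroup Kˣ, O.unitGroup ≤ D →
    (∀ x ∈ D, ∀ y : Kˣ, 1 ≤ O.valuation (y : K) →
      O.valuation (y : K) ≤ O.valuation (x : K) → y ∈ D) →
    (∀ x ∈ D, ∃ z ∈ D, z ^ ℓ / x ∈ O.unitGroup) →
    D = O.unitGroup

/-- The subgroup `𝔘_v^1 = ⟨1 + m_v, -1, K^{×ℓ}⟩` of `K^×`. -/
def U1v {K : Type*} [Field K] (ℓ : ℕ) (O : ValuationSubring K) : Subgroup Kˣ :=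
  Subgroup.closure {u : Kˣ | ∃ a : K, O.valuation a < 1 ∧ (u : K) = 1 + a} ⊔
    Subgroup.closure {(-1 : Kˣ)} ⊔ powSub K ℓ

/-- The collection `𝒱_K` of valuations of `K`: `Γ_v` has no nontrivial `ℓ`-divisible convex
subgroup, `k(v)^×/⟨k(v)^{×ℓ}, -1⟩` is non-cyclic, and `𝐇(⟨k(v)^{×ℓ}, -1⟩) = k(v)^×`. -/
def VK (K : Type*) [Field K] (ℓ : ℕ) : Set (ValuationSubring K) :=
  {O | NoLDivConvex ℓ O ∧
    ¬ IsCyclic ((IsLocalRing.ResidueField O)ˣ ⧸ smallSub (IsLocalRing.ResidueField O) ℓ) ∧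
    Hbold (smallSub (IsLocalRing.ResidueField O) ℓ) = ⊤}

/-- The collection `𝒯_K` of subgroups `T ≤ K^×`: `K^{×ℓ} ⊆ T`, `-1 ∈ T`, `T ≠ 𝐇(T)` and
`T ≤ 𝐇(T)` is minimal. -/
def TK (K : Type*) [Field K] (ℓ : ℕ) : Set (Subgroup Kˣ) :=
  {T | (∀ x : Kˣ, x ^ ℓ ∈ T) ∧ (-1 : Kˣ) ∈ T ∧ T ≠ Hbold T ∧
    ∀ T' : Subgroup Kˣ, (∀ x : Kˣ, x ^ ℓ ∈ T') → (-1 : Kˣ) ∈ T' → T' ≤ T → T' ≠ T →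
      ¬ (Hbold T' ≤ Hbold T)}

/-!
Modulo a subgroup `T` containing `-1` and the `ℓ`-th powers, `𝐇(T)` is generated by the elements at
which `T` fails to be rigid, so `T ≠ 𝐇(T)` means that `T` is not rigid.

From `T` to a valuation: if `T` is rigid at every element outside `H ≥ T` but not at some `a`, then
`x ∉ H` satisfies `1 - x ∈ T` or `1 - x⁻¹ ∈ T`, and the elements of the first kind, together with
the `x ∈ H` preserving them under multiplication, form a valuation ring `O`. For `H = 𝐇(T)` one has
`𝔘_v^1 ≤ T` and `𝐇(𝔘_v^1) ≤ 𝐇(T)`, so the minimality of `T` gives `T = 𝔘_v^1`.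

From a valuation to `T`: reduction modulo the maximal ideal matches the failures of rigidity of
`𝔘_v^1` with those of `⟨k(v)^{×ℓ}, -1⟩`, which turns the residue conditions defining `𝒱_K` into
`𝔘_v^1 ≠ 𝐇(𝔘_v^1) = O_v^× K^{×ℓ}`. As `Γ_v` has no nontrivial `ℓ`-divisible convex subgroup,
elements whose value is not an `ℓ`-th power occur with value arbitrarily close to `1`, on either
side. They make `𝔘_v^1` minimal, and they recover `O_v` from `𝔘_v^1`.
-/

theorem exists_dvd_mul_sub_one {ℓ : ℕ} (hℓ : ℓ.Prime) {n : ℤ} (hn : ¬(ℓ : ℤ) ∣ n) :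
    ∃ m : ℤ, (ℓ : ℤ) ∣ n * m - 1 := by
  obtain ⟨a, b, hab⟩ := (Nat.prime_iff_prime_int.mp hℓ).irreducible.coprime_iff_not_dvd.mpr hn
  exact ⟨b, -a, by linear_combination hab⟩

section Group

variable {G : Type*} [Group G] {ℓ : ℕ}

theorem zpow_eq_zpow_of_dvd_sub {g : G} (hg : g ^ ℓ = 1) {m n : ℤ} (h : (ℓ : ℤ) ∣ m - n) :
    g ^ m = g ^ n :=
  zpow_eq_zpow_iff_modEq.mpr <|
    ((Int.modEq_iff_dvd.mpr h).symm).of_dvd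
      (Int.natCast_dvd_natCast.mpr (orderOf_dvd_of_pow_eq_one hg))

theorem isCyclic_closure_pair_iff (hℓ : ℓ.Prime) (hG : ∀ g : G, g ^ ℓ = 1) {x y : G} (hx : x ≠ 1) :
    IsCyclic (Subgroup.closure {x, y}) ↔ y ∈ Subgroup.zpowers x := by
  rw [Subgroup.isCyclic_iff_exists_zpowers_eq_top]
  constructor
  · rintro ⟨g, hg⟩
    obtain ⟨m, rfl⟩ : x ∈ Subgroup.zpowers g := hg ▸ Subgroup.subset_closure (Set.mem_insert x _)
    have hy : y ∈ Subgroup.zpowers g := hg ▸ Subgroup.subset_closure (Set.mem_insert_of_mem _ rfl)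
    have hm : ¬(ℓ : ℤ) ∣ m := fun h ↦
      hx ((zpow_eq_zpow_of_dvd_sub (hG g) (by rwa [sub_zero])).trans (zpow_zero g))
    obtain ⟨k, hk⟩ := exists_dvd_mul_sub_one hℓ hm
    have hgm : g ∈ Subgroup.zpowers (g ^ m) :=
      ⟨k, show (g ^ m) ^ k = g by rw [← zpow_mul, zpow_eq_zpow_of_dvd_sub (hG g) hk, zpow_one]⟩
    exact Subgroup.zpowers_le.mpr hgm hy
  · intro hy
    refine ⟨x, le_antisymm (Subgroup.zpowers_le.mpr (Subgroup.subset_closure (Set.mem_insert x _)))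
      ((Subgroup.closure_le _).mpr ?_)⟩
    rintro z (rfl | rfl)
    exacts [Subgroup.mem_zpowers z, hy]

end Group

theorem exists_isCyclic_quotient_notMem {G : Type*} [CommGroup G] {ℓ : ℕ} (hℓ : ℓ.Prime)
    {M : Subgroup G} (hM : ∀ x : G, x ^ ℓ ∈ M) {y : G} (hy : y ∉ M) :
    ∃ H : Subgroup G, M ≤ H ∧ IsCyclic (G ⧸ H) ∧ y ∉ H := by
  have : Fact ℓ.Prime := ⟨hℓ⟩
  have : Module (ZMod ℓ) (Additive (G ⧸ M)) := AddCommGroup.zmodModule fun q ↦ by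
    obtain ⟨x, hx⟩ := QuotientGroup.mk_surjective q.toMul
    apply Additive.toMul.injective
    rw [toMul_nsmul, ← hx, ← QuotientGroup.mk_pow]
    exact (QuotientGroup.eq_one_iff _).mpr (hM x)
  have hy' : Additive.ofMul (y : G ⧸ M) ≠ 0 := fun h ↦ hy ((QuotientGroup.eq_one_iff y).mp h)
  obtain ⟨f, hf⟩ := not_forall.mp ((Module.forall_dual_apply_eq_zero_iff (ZMod ℓ) _).not.mpr hy')
  let φ : G →* Multiplicative (ZMod ℓ) :=
    (AddMonoidHom.toMultiplicativeRight f.toAddMonoidHom).comp (QuotientGroup.mk' M)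
  refine ⟨φ.ker, fun x hx ↦ ?_, isCyclic_of_injective _ (QuotientGroup.kerLift_injective φ),
    fun h ↦ hf h⟩
  have hx' : (x : G ⧸ M) = 1 := (QuotientGroup.eq_one_iff x).mpr hx
  change f (.ofMul (x : G ⧸ M)) = 0
  rw [hx', ofMul_one, map_zero]

theorem mk_mem_zpowers_mk_iff {G : Type*} [CommGroup G] {N : Subgroup G} {a b : G} :
    (b : G ⧸ N) ∈ Subgroup.zpowers (a : G ⧸ N) ↔ ∃ k : ℤ, a ^ k * b ∈ N := by
  rw [Subgroup.mem_zpowers_iff]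
  constructor
  · rintro ⟨k, hk⟩
    rw [← QuotientGroup.mk_zpow, QuotientGroup.eq, ← zpow_neg] at hk
    exact ⟨-k, hk⟩
  · rintro ⟨k, hk⟩
    refine ⟨-k, ?_⟩
    rwa [← QuotientGroup.mk_zpow, QuotientGroup.eq, zpow_neg, inv_inv]

section OfUnits

variable {F : Type*} [Field F] {T H : Subgroup Fˣ} {ℓ : ℕ} {x y : F}

@[simp]
theorem coe_mem_ofUnits_iff {u : Fˣ} : (u : F) ∈ T.ofUnits ↔ u ∈ T :=
  ⟨T.mem_of_mem_val_ofUnits, fun h ↦ T.mem_ofUnits h rfl⟩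

theorem mk0_mem_iff (hx : x ≠ 0) : Units.mk0 x hx ∈ T ↔ x ∈ T.ofUnits :=
  coe_mem_ofUnits_iff.symm

theorem mem_ofUnits_inf_iff : x ∈ (T ⊓ H).ofUnits ↔ x ∈ T.ofUnits ∧ x ∈ H.ofUnits := by
  refine ⟨fun h ↦ ⟨Subgroup.ofUnits_mono inf_le_left h, Subgroup.ofUnits_mono inf_le_right h⟩, ?_⟩
  rintro ⟨⟨u, hu, rfl⟩, h⟩
  exact coe_mem_ofUnits_iff.mpr ⟨hu, coe_mem_ofUnits_iff.mp h⟩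

theorem ne_zero_of_mem_ofUnits (hx : x ∈ T.ofUnits) : x ≠ 0 := by
  obtain ⟨u, -, rfl⟩ := (T.mem_ofUnits_iff _).mp hx
  exact u.ne_zero

theorem one_sub_ne_zero_of_notMem_ofUnits (hx : x ∉ T.ofUnits) : 1 - x ≠ 0 := fun h ↦
  hx (sub_eq_zero.mp h ▸ one_mem _)

theorem inv_mem_ofUnits (hx : x ∈ T.ofUnits) : x⁻¹ ∈ T.ofUnits := by
  obtain ⟨u, hu, rfl⟩ := (T.mem_ofUnits_iff _).mp hx
  exact T.mem_ofUnits (inv_mem hu) u.val_inv_eq_inv_val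

theorem inv_mem_ofUnits_iff : x⁻¹ ∈ T.ofUnits ↔ x ∈ T.ofUnits :=
  ⟨fun h ↦ inv_inv x ▸ inv_mem_ofUnits h, inv_mem_ofUnits⟩

theorem div_mem_ofUnits (hx : x ∈ T.ofUnits) (hy : y ∈ T.ofUnits) : x / y ∈ T.ofUnits :=
  div_eq_mul_inv x y ▸ mul_mem hx (inv_mem_ofUnits hy)

theorem zpow_mem_ofUnits (hx : x ∈ T.ofUnits) (n : ℤ) : x ^ n ∈ T.ofUnits := by
  obtain ⟨u, hu, rfl⟩ := (T.mem_ofUnits_iff _).mp hx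
  exact T.mem_ofUnits (zpow_mem hu n) (u.val_zpow_eq_zpow_val n)

theorem mul_mem_ofUnits_iff_right (hx : x ∈ T.ofUnits) : x * y ∈ T.ofUnits ↔ y ∈ T.ofUnits :=
  ⟨fun h ↦ inv_mul_cancel_left₀ (ne_zero_of_mem_ofUnits hx) y ▸ mul_mem (inv_mem_ofUnits hx) h,
    mul_mem hx⟩

theorem mul_mem_ofUnits_iff_left (hy : y ∈ T.ofUnits) : x * y ∈ T.ofUnits ↔ x ∈ T.ofUnits := by
  rw [mul_comm, mul_mem_ofUnits_iff_right hy]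

theorem neg_mem_ofUnits_iff (hneg : -1 ∈ T) : -x ∈ T.ofUnits ↔ x ∈ T.ofUnits := by
  have h : (-1 : F) ∈ T.ofUnits := T.mem_ofUnits hneg (by simp)
  rw [← neg_one_mul, mul_mem_ofUnits_iff_right h]

theorem zpow_mem_ofUnits_of_dvd (hpow : ∀ u : Fˣ, u ^ ℓ ∈ T) (hx : x ≠ 0) {n : ℤ}
    (hn : (ℓ : ℤ) ∣ n) : x ^ n ∈ T.ofUnits := by
  obtain ⟨k, rfl⟩ := hn
  rw [mul_comm, zpow_mul, zpow_natCast]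
  exact T.mem_ofUnits (hpow (Units.mk0 x hx ^ k)) (by simp)

theorem mem_ofUnits_of_zpow_mem (hℓ : ℓ.Prime) (hpow : ∀ u : Fˣ, u ^ ℓ ∈ T) (hx : x ≠ 0) {n : ℤ}
    (hn : ¬(ℓ : ℤ) ∣ n) (h : x ^ n ∈ T.ofUnits) : x ∈ T.ofUnits := by
  obtain ⟨k, hk⟩ := exists_dvd_mul_sub_one hℓ hn
  have hx' : x = (x ^ n) ^ k / x ^ (n * k - 1) := by
    rw [← zpow_mul, ← zpow_sub₀ hx, sub_sub_cancel, zpow_one]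
  rw [hx']
  exact div_mem_ofUnits (zpow_mem_ofUnits h k) (zpow_mem_ofUnits_of_dvd hpow hx hk)

end OfUnits

section Nonrigid

variable {F : Type*} [Field F] {T T' M : Subgroup Fˣ} {ℓ : ℕ} {x : F}

/-- `T` fails to be rigid at `x`: neither `x` nor any product `x ^ k * (1 - x)` lies in `T`. When
`T` contains the `ℓ`-th powers, this says that `x` and `1 - x` are independent modulo `T`. It
forces `x ≠ 0`, by the case `k = 0`, and `x ≠ 1`. -/
def NonrigidAt (T : Subgroup Fˣ) (x : F) : Prop :=
  x ∉ T.ofUnits ∧ ∀ k : ℤ, x ^ k * (1 - x) ∉ T.ofUnits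

namespace NonrigidAt

theorem notMem (h : NonrigidAt T x) : x ∉ T.ofUnits := h.1

theorem one_sub_notMem (h : NonrigidAt T x) : 1 - x ∉ T.ofUnits := by
  simpa only [zpow_zero, one_mul] using h.2 0

theorem ne_zero (h : NonrigidAt T x) : x ≠ 0 := by
  rintro rfl
  exact h.one_sub_notMem ((sub_zero (1 : F)).symm ▸ one_mem _)

theorem one_sub_ne_zero (h : NonrigidAt T x) : 1 - x ≠ 0 :=
  one_sub_ne_zero_of_notMem_ofUnits h.notMem

theorem mono (h : NonrigidAt T x) (hT : T' ≤ T) : NonrigidAt T' x :=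
  ⟨fun hx ↦ h.1 (Subgroup.ofUnits_mono hT hx), fun k hk ↦ h.2 k (Subgroup.ofUnits_mono hT hk)⟩

theorem inv (h : NonrigidAt T x) (hneg : -1 ∈ T) : NonrigidAt T x⁻¹ := by
  refine ⟨fun hx ↦ h.notMem (inv_mem_ofUnits_iff.mp hx), fun k hk ↦ h.2 (-k - 1) ?_⟩
  rw [← neg_mem_ofUnits_iff hneg]
  convert hk using 1
  rw [zpow_sub₀ h.ne_zero, zpow_neg, zpow_one, inv_zpow]
  have := h.ne_zero
  field_simp
  ring

theorem dvd_of_zpow_mul_zpow_mem (hℓ : ℓ.Prime) (hpow : ∀ u : Fˣ, u ^ ℓ ∈ T) (h : NonrigidAt T x)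
    {i j : ℤ} (hij : x ^ i * (1 - x) ^ j ∈ T.ofUnits) : (ℓ : ℤ) ∣ i ∧ (ℓ : ℤ) ∣ j := by
  have hj : (ℓ : ℤ) ∣ j := by
    by_contra hj
    obtain ⟨k, hk⟩ := exists_dvd_mul_sub_one hℓ hj
    refine h.2 (i * k) ?_
    have hmul : x ^ (i * k) * (1 - x)
        = (x ^ i * (1 - x) ^ j) ^ k / (1 - x) ^ (j * k - 1) := by
      rw [mul_zpow, ← zpow_mul, ← zpow_mul, zpow_sub_one₀ h.one_sub_ne_zero]
      field_simp [h.one_sub_ne_zero]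
    rw [hmul]
    exact div_mem_ofUnits (zpow_mem_ofUnits hij k)
      (zpow_mem_ofUnits_of_dvd hpow h.one_sub_ne_zero hk)
  have hi := (mul_mem_ofUnits_iff_left
    (zpow_mem_ofUnits_of_dvd hpow h.one_sub_ne_zero hj)).mp hij
  exact ⟨not_not.mp fun hi' ↦ h.notMem (mem_ofUnits_of_zpow_mem hℓ hpow h.ne_zero hi' hi), hj⟩

theorem one_sub (hℓ : ℓ.Prime) (hpow : ∀ u : Fˣ, u ^ ℓ ∈ T) (h : NonrigidAt T x) :
    NonrigidAt T (1 - x) := by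
  refine ⟨h.one_sub_notMem, fun k hk ↦ ?_⟩
  have hk' : x ^ (1 : ℤ) * (1 - x) ^ k ∈ T.ofUnits := by
    rwa [zpow_one, mul_comm, ← sub_sub_cancel 1 x, sub_sub_cancel 1 (1 - x)]
  exact (Nat.prime_iff_prime_int.mp hℓ).not_dvd_one (h.dvd_of_zpow_mul_zpow_mem hℓ hpow hk').1

end NonrigidAt

theorem isRigid_iff (hℓ : ℓ.Prime) (hpow : ∀ u : Fˣ, u ^ ℓ ∈ T) :
    IsRigid T ↔ ∀ x : F, ¬NonrigidAt T x := by
  have hquot (q : Fˣ ⧸ T) : q ^ ℓ = 1 := by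
    obtain ⟨u, rfl⟩ := QuotientGroup.mk_surjective q
    exact (QuotientGroup.eq_one_iff _).mpr (hpow u)
  have hcyclic (u : Fˣ) (hu : u ∉ T) (h : 1 - (u : F) ≠ 0) :
      IsCyclic (Subgroup.closure {(u : Fˣ ⧸ T), (Units.mk0 (1 - (u : F)) h : Fˣ ⧸ T)}) ↔
        ∃ k : ℤ, (u : F) ^ k * (1 - u) ∈ T.ofUnits := by
    rw [isCyclic_closure_pair_iff hℓ hquot ((QuotientGroup.eq_one_iff u).not.mpr hu),
      mk_mem_zpowers_mk_iff]
    simp [← coe_mem_ofUnits_iff]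
  constructor
  · intro hT x hx
    obtain ⟨k, hk⟩ := (hcyclic (Units.mk0 x hx.ne_zero) (mt (mk0_mem_iff _).mp hx.notMem)
      hx.one_sub_ne_zero).mp (hT _ (mt (mk0_mem_iff _).mp hx.notMem) hx.one_sub_ne_zero)
    exact hx.2 k hk
  · intro hT u hu h
    refine (hcyclic u hu h).mpr ?_
    by_contra! hk
    exact hT u ⟨coe_mem_ofUnits_iff.not.mpr hu, hk⟩

theorem isRigid_of_isCyclic_quotient [IsCyclic (Fˣ ⧸ T)] : IsRigid T := fun _ _ _ ↦ inferInstance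

theorem le_Hbold : T ≤ Hbold T :=
  le_sInf fun _ hH ↦ hH.1.1

theorem NonrigidAt.mem_Hbold (hℓ : ℓ.Prime) (hpow : ∀ u : Fˣ, u ^ ℓ ∈ T) (hx : NonrigidAt T x) :
    x ∈ (Hbold T).ofUnits := by
  set u := Units.mk0 x hx.ne_zero with hu
  set w := Units.mk0 (1 - x) hx.one_sub_ne_zero with hw
  rw [← mk0_mem_iff hx.ne_zero]
  refine Subgroup.mem_sInf.mpr fun H ⟨⟨hTH, _⟩, hrigid⟩ ↦ ?_
  by_contra huH
  have hwM : w ∉ T ⊔ Subgroup.zpowers u := by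
    intro hwM
    obtain ⟨t, ht, z, ⟨k, rfl⟩, htz⟩ := Subgroup.mem_sup.mp hwM
    refine hx.2 (-k) (T.mem_ofUnits ht ?_)
    rw [eq_mul_inv_of_mul_eq htz]
    simp [hu, hw, mul_comm]
  obtain ⟨H', hMH', hcyc, hwH'⟩ :=
    exists_isCyclic_quotient_notMem hℓ (fun v ↦ Subgroup.mem_sup_left (hpow v)) hwM
  obtain ⟨hTH', huH'⟩ := sup_le_iff.mp hMH'
  have hpow' (v : Fˣ) : v ^ ℓ ∈ H ⊓ H' := Subgroup.mem_inf.mpr ⟨hTH (hpow v), hTH' (hpow v)⟩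
  refine (isRigid_iff hℓ hpow').mp (hrigid H' hTH' hcyc) x
    ⟨fun hxH ↦ huH ((mk0_mem_iff _).mpr hxH).1, fun k hk ↦ hwH' ?_⟩
  have hk' : x ^ k * (1 - x) ∈ H'.ofUnits := Subgroup.ofUnits_mono inf_le_right hk
  have hxH' : x ∈ H'.ofUnits :=
    (mk0_mem_iff hx.ne_zero).mp (huH' (Subgroup.mem_zpowers u))
  exact (mk0_mem_iff _).mpr ((mul_mem_ofUnits_iff_right (zpow_mem_ofUnits hxH' k)).mp hk')

theorem Hbold_le_iff (hℓ : ℓ.Prime) (hpow : ∀ u : Fˣ, u ^ ℓ ∈ T) (hTM : T ≤ M) :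
    Hbold T ≤ M ↔ ∀ x : F, NonrigidAt T x → x ∈ M.ofUnits := by
  refine ⟨fun h x hx ↦ Subgroup.ofUnits_mono h (hx.mem_Hbold hℓ hpow), fun hM y hy ↦ ?_⟩
  by_contra hyM
  obtain ⟨H, hMH, hcyc, hyH⟩ :=
    exists_isCyclic_quotient_notMem hℓ (fun u ↦ hTM (hpow u)) hyM
  have hTH := hTM.trans hMH
  refine hyH (Subgroup.mem_sInf.mp hy H ⟨⟨hTH, hcyc⟩, fun H' hTH' hcyc' ↦ ?_⟩)
  have hpow' (u : Fˣ) : u ^ ℓ ∈ H ⊓ H' := Subgroup.mem_inf.mpr ⟨hTH (hpow u), hTH' (hpow u)⟩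
  refine (isRigid_iff hℓ hpow').mpr fun x hx ↦ ?_
  have hxT : NonrigidAt T x := hx.mono (le_inf hTH hTH')
  have hxH : x ∈ H.ofUnits := Subgroup.ofUnits_mono hMH (hM x hxT)
  have hxH₁ : 1 - x ∈ H.ofUnits := Subgroup.ofUnits_mono hMH (hM _ (hxT.one_sub hℓ hpow))
  refine (isRigid_iff hℓ fun u ↦ hTH' (hpow u)).mp isRigid_of_isCyclic_quotient x
    ⟨fun h ↦ hx.1 (mem_ofUnits_inf_iff.mpr ⟨hxH, h⟩),
      fun k hk ↦ hx.2 k (mem_ofUnits_inf_iff.mpr ⟨?_, hk⟩)⟩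
  exact mul_mem (zpow_mem_ofUnits hxH k) hxH₁

theorem Hbold_eq_self_iff (hℓ : ℓ.Prime) (hpow : ∀ u : Fˣ, u ^ ℓ ∈ T) :
    Hbold T = T ↔ IsRigid T := by
  rw [isRigid_iff hℓ hpow, ← le_Hbold.ge_iff_eq', Hbold_le_iff hℓ hpow le_rfl]
  exact forall_congr' fun x ↦ ⟨fun h hx ↦ hx.notMem (h hx), fun h hx ↦ absurd hx h⟩

end Nonrigid

section RigidPair

variable {F : Type*} [Field F] {ℓ : ℕ} {T H : Subgroup Fˣ} {x y z a s t u : F}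

/-- The setting of the valuation construction: subgroups `T ≤ H` of `Fˣ`, with `T` containing `-1`
and all `ℓ`-th powers, such that `T` fails to be rigid somewhere, but only at elements of `H`. -/
structure RigidPair (ℓ : ℕ) (T H : Subgroup Fˣ) : Prop where
  prime : ℓ.Prime
  pow_mem : ∀ u : Fˣ, u ^ ℓ ∈ T
  neg_one_mem : -1 ∈ T
  le : T ≤ H
  mem_of_nonrigidAt : ∀ x : F, NonrigidAt T x → x ∈ H.ofUnits
  exists_nonrigidAt : ∃ a : F, NonrigidAt T a

/-- The set `O⁻(T, H)` of Arason, Elman and Jacob. It contains `0`. -/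
def OMinus (T H : Subgroup Fˣ) : Set F :=
  {x | x ∉ H.ofUnits ∧ 1 - x ∈ T.ofUnits}

/-- The set `O⁺(T, H)` of Arason, Elman and Jacob. The union of `O⁻(T, H)` and `O⁺(T, H)` is the
valuation ring attached to a rigid pair. -/
def OPlus (T H : Subgroup Fˣ) : Set F :=
  {x | x ∈ H.ofUnits ∧ ∀ s ∈ OMinus T H, x * s ∈ OMinus T H}

theorem zero_mem_OMinus : (0 : F) ∈ OMinus T H :=
  ⟨fun h ↦ ne_zero_of_mem_ofUnits h rfl, by rw [sub_zero]; exact one_mem _⟩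

namespace RigidPair

theorem ofUnits_le (R : RigidPair ℓ T H) : T.ofUnits ≤ H.ofUnits :=
  Subgroup.ofUnits_mono R.le

theorem neg_mem_iff (R : RigidPair ℓ T H) : -x ∈ T.ofUnits ↔ x ∈ T.ofUnits :=
  neg_mem_ofUnits_iff R.neg_one_mem

theorem one_sub_inv_mem_iff (R : RigidPair ℓ T H) (hx : x ≠ 0) :
    1 - x⁻¹ ∈ T.ofUnits ↔ (1 - x) / x ∈ T.ofUnits := by
  rw [← R.neg_mem_iff, sub_div, div_self hx, one_div, neg_sub]

theorem exists_zpow_mul_one_sub_mem (R : RigidPair ℓ T H) (hx : x ∉ H.ofUnits) :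
    ∃ k : ℤ, x ^ k * (1 - x) ∈ T.ofUnits := by
  by_contra! h
  exact hx (R.mem_of_nonrigidAt x ⟨fun hxT ↦ hx (R.ofUnits_le hxT), h⟩)

theorem mem_of_zpow_mem (R : RigidPair ℓ T H) (hx : x ≠ 0) {n : ℤ} (hn : ¬(ℓ : ℤ) ∣ n)
    (h : x ^ n ∈ H.ofUnits) : x ∈ H.ofUnits :=
  mem_ofUnits_of_zpow_mem R.prime (fun v ↦ R.le (R.pow_mem v)) hx hn h

theorem dvd_and_mem_of_zpow_mul_mem (R : RigidPair ℓ T H) (hx₀ : x ≠ 0) (hx : x ∉ H.ofUnits)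
    (hy : y ∈ H.ofUnits) {n : ℤ} (h : x ^ n * y ∈ T.ofUnits) :
    (ℓ : ℤ) ∣ n ∧ y ∈ T.ofUnits := by
  have hn : (ℓ : ℤ) ∣ n := not_not.mp fun hn ↦
    hx (R.mem_of_zpow_mem hx₀ hn ((mul_mem_ofUnits_iff_left hy).mp (R.ofUnits_le h)))
  exact ⟨hn, (mul_mem_ofUnits_iff_right (zpow_mem_ofUnits_of_dvd R.pow_mem hx₀ hn)).mp h⟩

theorem one_sub_div_mem_of_dvd (R : RigidPair ℓ T H) (hx : x ≠ 0) {n : ℤ}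
    (h : x ^ n * (1 - x) ∈ T.ofUnits) (hn : (ℓ : ℤ) ∣ n + 1) : (1 - x) / x ∈ T.ofUnits := by
  have key := div_mem_ofUnits h (zpow_mem_ofUnits_of_dvd R.pow_mem hx hn)
  rwa [zpow_add_one₀ hx, mul_div_mul_left _ _ (zpow_ne_zero n hx)] at key

-- With `y = 1 - x` and `b = 1 - a`, the identity `b - y = x - a` compares the exponents of `x`,
-- `a` and `b` in the three given elements of `T`.
theorem dvd_add_one_of_nonrigidAt (R : RigidPair ℓ T H) (hx₀ : x ≠ 0) (hx : x ∉ H.ofUnits)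
    (ha : NonrigidAt T a) {i k j : ℤ} (hi : x ^ i * (1 - x) ∈ T.ofUnits)
    (hk : (x / a) ^ k * (1 - x / a) ∈ T.ofUnits)
    (hj : ((1 - x) / (1 - a)) ^ j * (1 - (1 - x) / (1 - a)) ∈ T.ofUnits) :
    (ℓ : ℤ) ∣ i + 1 ∧ (ℓ : ℤ) ∣ k + 1 := by
  have ha₀ := ha.ne_zero
  have hb₀ := ha.one_sub_ne_zero
  have hy₀ := one_sub_ne_zero_of_notMem_ofUnits hx
  have haH := R.mem_of_nonrigidAt a ha
  have hbH := R.mem_of_nonrigidAt _ (ha.one_sub R.prime R.pow_mem)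
  have hax : a - x ≠ 0 := fun h ↦ hx (sub_eq_zero.mp h ▸ haH)
  have hrel : x ^ (-k - i * j) * (a ^ (k + 1) * (1 - a) ^ (-j - 1)) ∈ T.ofUnits := by
    rw [← R.neg_mem_iff]
    convert div_mem_ofUnits (div_mem_ofUnits hj hk) (zpow_mem_ofUnits hi j) using 1
    have h₁ : 1 - x / a = (a - x) / a := by field_simp
    have h₂ : 1 - (1 - x) / (1 - a) = -((a - x) / (1 - a)) := by field_simp; ring
    rw [h₁, h₂, mul_zpow, div_zpow, div_zpow, ← zpow_mul, zpow_sub₀ hx₀, zpow_neg,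
      zpow_add_one₀ ha₀, zpow_sub_one₀ hb₀, zpow_neg]
    field_simp
  obtain ⟨hx', hab⟩ := R.dvd_and_mem_of_zpow_mul_mem hx₀ hx
    (mul_mem (zpow_mem_ofUnits haH _) (zpow_mem_ofUnits hbH _)) hrel
  obtain ⟨ha', hb'⟩ := ha.dvd_of_zpow_mul_zpow_mem R.prime R.pow_mem hab
  refine ⟨?_, ha'⟩
  have hi' : i + 1 = (-k - i * j) + (k + 1) - i * (-j - 1) := by ring
  exact hi' ▸ dvd_sub (dvd_add hx' ha') (hb'.mul_left i)

theorem one_sub_mem_or_of_nonrigidAt (R : RigidPair ℓ T H) (hx : x ∉ H.ofUnits)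
    (ha : NonrigidAt T a) :
    1 - x ∈ T.ofUnits ∨ (1 - x) / x ∈ T.ofUnits ∧ (1 - x / a) / (x / a) ∈ T.ofUnits := by
  rcases eq_or_ne x 0 with rfl | hx₀
  · exact .inl (zero_mem_OMinus (H := H)).2
  obtain ⟨i, hi⟩ := R.exists_zpow_mul_one_sub_mem hx
  by_cases hiℓ : (ℓ : ℤ) ∣ i
  · exact .inl ((mul_mem_ofUnits_iff_right (zpow_mem_ofUnits_of_dvd R.pow_mem hx₀ hiℓ)).mp hi)
  right
  have haH := inv_mem_ofUnits (R.mem_of_nonrigidAt a ha)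
  have hbH := inv_mem_ofUnits (R.mem_of_nonrigidAt _ (ha.one_sub R.prime R.pow_mem))
  have hy : 1 - x ∉ H.ofUnits := fun hy ↦
    hx (R.mem_of_zpow_mem hx₀ hiℓ ((mul_mem_ofUnits_iff_left hy).mp (R.ofUnits_le hi)))
  have hxa : x / a ∉ H.ofUnits := by rwa [div_eq_mul_inv, mul_mem_ofUnits_iff_left haH]
  have hyb : (1 - x) / (1 - a) ∉ H.ofUnits := by
    rwa [div_eq_mul_inv, mul_mem_ofUnits_iff_left hbH]
  obtain ⟨k, hk⟩ := R.exists_zpow_mul_one_sub_mem hxa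
  obtain ⟨j, hj⟩ := R.exists_zpow_mul_one_sub_mem hyb
  obtain ⟨hi', hk'⟩ := R.dvd_add_one_of_nonrigidAt hx₀ hx ha hi hk hj
  exact ⟨R.one_sub_div_mem_of_dvd hx₀ hi hi',
    R.one_sub_div_mem_of_dvd (div_ne_zero hx₀ ha.ne_zero) hk hk'⟩

theorem one_sub_mem_or_one_sub_div_mem (R : RigidPair ℓ T H) (hx : x ∉ H.ofUnits) :
    1 - x ∈ T.ofUnits ∨ (1 - x) / x ∈ T.ofUnits := by
  obtain ⟨a, ha⟩ := R.exists_nonrigidAt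
  exact (R.one_sub_mem_or_of_nonrigidAt hx ha).imp_right And.left

theorem add_mul_mem_or_div_mem (R : RigidPair ℓ T H) (hx : x ∉ H.ofUnits) (ht : t ∈ T.ofUnits)
    (hu : u ∈ T.ofUnits) : t + x * u ∈ T.ofUnits ∨ (t + x * u) / x ∈ T.ofUnits := by
  have ht₀ := ne_zero_of_mem_ofUnits ht
  have hut : -(u / t) ∈ T.ofUnits := R.neg_mem_iff.mpr (div_mem_ofUnits hu ht)
  have hy : x * -(u / t) ∉ H.ofUnits := by rwa [mul_mem_ofUnits_iff_left (R.ofUnits_le hut)]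
  have hadd : t + x * u = t * (1 - x * -(u / t)) := by field_simp; ring
  rw [hadd]
  refine (R.one_sub_mem_or_one_sub_div_mem hy).imp (mul_mem ht) fun h ↦ ?_
  convert mul_mem (mul_mem ht h) hut using 1
  have hut₀ := ne_zero_of_mem_ofUnits hut
  rw [mul_div_assoc, mul_assoc, div_mul_eq_mul_div, mul_div_mul_right _ _ hut₀]

theorem mem_OMinus_or_inv_mem_OMinus (R : RigidPair ℓ T H) (hx : x ∉ H.ofUnits) :
    x ∈ OMinus T H ∨ x⁻¹ ∈ OMinus T H := by
  rcases eq_or_ne x 0 with rfl | hx₀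
  · exact .inl zero_mem_OMinus
  exact (R.one_sub_mem_or_one_sub_div_mem hx).imp (.intro hx) fun h ↦
    ⟨mt inv_mem_ofUnits_iff.mp hx, (R.one_sub_inv_mem_iff hx₀).mpr h⟩

theorem inv_notMem_OMinus (R : RigidPair ℓ T H) (hx₀ : x ≠ 0) (hx : x ∈ OMinus T H) :
    x⁻¹ ∉ OMinus T H := by
  intro hx'
  have h := div_mem_ofUnits hx.2 ((R.one_sub_inv_mem_iff hx₀).mp hx'.2)
  rw [div_div_cancel₀ (one_sub_ne_zero_of_notMem_ofUnits hx.1)] at h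
  exact hx.1 (R.ofUnits_le h)

theorem mul_mem_OMinus_of_nonrigidAt (R : RigidPair ℓ T H) (ha : NonrigidAt T a)
    (hx : x ∈ OMinus T H) : a * x ∈ OMinus T H := by
  rcases eq_or_ne x 0 with rfl | hx₀
  · rwa [mul_zero]
  have hx' : x⁻¹ ∉ H.ofUnits := mt inv_mem_ofUnits_iff.mp hx.1
  refine ⟨mt (mul_mem_ofUnits_iff_right (R.mem_of_nonrigidAt a ha)).mp hx.1, ?_⟩
  rcases R.one_sub_mem_or_of_nonrigidAt hx' ha with h | ⟨-, h⟩
  · exact absurd ⟨hx', h⟩ (R.inv_notMem_OMinus hx₀ hx)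
  · have hax := (R.one_sub_inv_mem_iff (div_ne_zero (inv_ne_zero hx₀) ha.ne_zero)).mpr h
    rwa [inv_div, div_inv_eq_mul] at hax

theorem one_sub_mul_mem_or_div_mem (R : RigidPair ℓ T H) (hx : x ∈ OMinus T H)
    (hy : y ∈ OMinus T H) : 1 - x * y ∈ T.ofUnits ∨ (1 - x * y) / x ∈ T.ofUnits := by
  have h := R.add_mul_mem_or_div_mem hx.1 hx.2 hy.2
  rwa [show 1 - x + x * (1 - y) = 1 - x * y by ring] at h

-- Otherwise `(x, y)` and `(a * x, a⁻¹ * y)`, which have the same product, would both fall into the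
-- second alternative of `one_sub_mul_mem_or_div_mem`, whence `a ∈ T`.
theorem one_sub_mul_mem (R : RigidPair ℓ T H) (hx : x ∈ OMinus T H) (hy : y ∈ OMinus T H) :
    1 - x * y ∈ T.ofUnits := by
  obtain ⟨a, ha⟩ := R.exists_nonrigidAt
  have ha₀ := ha.ne_zero
  by_contra h
  have h₁ := (R.one_sub_mul_mem_or_div_mem hx hy).resolve_left h
  have h₂ := R.one_sub_mul_mem_or_div_mem (R.mul_mem_OMinus_of_nonrigidAt ha hx)
    (R.mul_mem_OMinus_of_nonrigidAt (ha.inv R.neg_one_mem) hy)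
  rw [show a * x * (a⁻¹ * y) = x * y by field_simp] at h₂
  have hxy : 1 - x * y ≠ 0 := (div_ne_zero_iff.mp (ne_zero_of_mem_ofUnits h₁)).1
  have hx₀ : x ≠ 0 := (div_ne_zero_iff.mp (ne_zero_of_mem_ofUnits h₁)).2
  refine ha.notMem ?_
  convert div_mem_ofUnits h₁ (h₂.resolve_left h) using 1
  field_simp

theorem mul_mem_OMinus (R : RigidPair ℓ T H) (hx : x ∈ OMinus T H) (hy : y ∈ OMinus T H)
    (hxy : x * y ∉ H.ofUnits) : x * y ∈ OMinus T H :=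
  ⟨hxy, R.one_sub_mul_mem hx hy⟩

theorem neg_mem_OMinus (R : RigidPair ℓ T H) (hx : x ∈ OMinus T H) : -x ∈ OMinus T H := by
  refine ⟨mt (neg_mem_ofUnits_iff (R.le R.neg_one_mem)).mp hx.1, ?_⟩
  convert div_mem_ofUnits (R.one_sub_mul_mem hx hx) hx.2 using 1
  have := one_sub_ne_zero_of_notMem_ofUnits hx.1
  field_simp
  ring

theorem mul_mul_mem_OMinus_of_notMem (R : RigidPair ℓ T H) (hx : x ∈ OMinus T H)
    (hy : y ∈ OMinus T H) (hz : z ∈ OMinus T H) (hxyH : x * y ∈ H.ofUnits)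
    (hxyT : x * y ∉ T.ofUnits) : x * y * z ∈ OMinus T H := by
  have hxyz : x * y * z ∉ H.ofUnits := mt (mul_mem_ofUnits_iff_right hxyH).mp hz.1
  refine ⟨hxyz, ?_⟩
  have hsum := R.add_mul_mem_or_div_mem hz.1 hz.2 (R.one_sub_mul_mem hx hy)
  rw [show 1 - z + z * (1 - x * y) = 1 - x * y * z by ring] at hsum
  by_contra h
  have h₁ := (R.one_sub_mem_or_one_sub_div_mem hxyz).resolve_left h
  have hz₀ : z ≠ 0 := (div_ne_zero_iff.mp (ne_zero_of_mem_ofUnits (hsum.resolve_left h))).2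
  refine hxyT ?_
  convert div_mem_ofUnits (hsum.resolve_left h) h₁ using 1
  have := one_sub_ne_zero_of_notMem_ofUnits hxyz
  have := ne_zero_of_mem_ofUnits hxyH
  field_simp

theorem mul_mul_mem_OMinus (R : RigidPair ℓ T H) (hx : x ∈ OMinus T H) (hy : y ∈ OMinus T H)
    (hz : z ∈ OMinus T H) (hxy : x * y ∈ H.ofUnits) : x * y * z ∈ OMinus T H := by
  by_cases hT : x * y ∈ T.ofUnits
  · obtain ⟨a, ha⟩ := R.exists_nonrigidAt
    have haxyz : a * x * y * z ∈ OMinus T H :=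
      R.mul_mul_mem_OMinus_of_notMem (R.mul_mem_OMinus_of_nonrigidAt ha hx) hy hz
        (mul_assoc a x y ▸ mul_mem (R.mem_of_nonrigidAt a ha) hxy)
        (mul_assoc a x y ▸ mt (mul_mem_ofUnits_iff_left hT).mp ha.notMem)
    convert R.mul_mem_OMinus_of_nonrigidAt (ha.inv R.neg_one_mem) haxyz using 1
    rw [mul_assoc a, mul_assoc a, inv_mul_cancel_left₀ ha.ne_zero]
  · exact R.mul_mul_mem_OMinus_of_notMem hx hy hz hxy hT

theorem mul_mem_OPlus_of_mem_OMinus (R : RigidPair ℓ T H) (hx : x ∈ OMinus T H)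
    (hy : y ∈ OMinus T H) (hxy : x * y ∈ H.ofUnits) : x * y ∈ OPlus T H :=
  ⟨hxy, fun _ hs ↦ R.mul_mul_mem_OMinus hx hy hs hxy⟩

theorem exists_inv_mul_mem_OMinus (R : RigidPair ℓ T H) (hx : x ∈ H.ofUnits) (hx' : x ∉ OPlus T H) :
    ∃ s ∈ OMinus T H, s ≠ 0 ∧ (x * s)⁻¹ ∈ OMinus T H := by
  obtain ⟨s, hs, hxs⟩ : ∃ s ∈ OMinus T H, x * s ∉ OMinus T H := by
    by_contra! h
    exact hx' ⟨hx, h⟩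
  refine ⟨s, hs, fun hs₀ ↦ hxs ?_, (R.mem_OMinus_or_inv_mem_OMinus
    (mt (mul_mem_ofUnits_iff_right hx).mp hs.1)).resolve_left hxs⟩
  rw [hs₀, mul_zero]
  exact zero_mem_OMinus

theorem mem_OPlus_or_inv_mem_OPlus (R : RigidPair ℓ T H) (hx : x ∈ H.ofUnits) :
    x ∈ OPlus T H ∨ x⁻¹ ∈ OPlus T H := by
  by_contra! h
  obtain ⟨s, hs, hs₀, hxs⟩ := R.exists_inv_mul_mem_OMinus hx h.1
  obtain ⟨t, ht, ht₀, hxt⟩ := R.exists_inv_mul_mem_OMinus (inv_mem_ofUnits hx) h.2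
  have hx₀ := ne_zero_of_mem_ofUnits hx
  have hmul : (x * s)⁻¹ * (x⁻¹ * t)⁻¹ = (s * t)⁻¹ := by field_simp
  by_cases hst : s * t ∈ H.ofUnits
  · have key := R.mul_mul_mem_OMinus hxs hxt hs (hmul ▸ inv_mem_ofUnits hst)
    rw [hmul, mul_inv_rev, inv_mul_cancel_right₀ hs₀] at key
    exact R.inv_notMem_OMinus ht₀ ht key
  · have key := R.mul_mem_OMinus hxs hxt (hmul ▸ mt inv_mem_ofUnits_iff.mp hst)
    exact R.inv_notMem_OMinus (mul_ne_zero hs₀ ht₀) (R.mul_mem_OMinus hs ht hst) (hmul ▸ key)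

theorem div_one_sub_mem_OMinus (R : RigidPair ℓ T H) (hs : s ∈ OMinus T H) :
    s / (1 - s) ∈ OMinus T H := by
  have hs' := inv_mem_ofUnits hs.2
  have hne := one_sub_ne_zero_of_notMem_ofUnits hs.1
  rw [← neg_neg (s / (1 - s))]
  refine R.neg_mem_OMinus ⟨?_, ?_⟩
  · rw [neg_mem_ofUnits_iff (R.le R.neg_one_mem), div_eq_mul_inv,
      mul_mem_ofUnits_iff_left (R.ofUnits_le hs')]
    exact hs.1
  · convert hs' using 1
    field_simp
    ring

theorem one_sub_mul_mem_of_mem_union (R : RigidPair ℓ T H) (hx : x ∈ OMinus T H ∪ OPlus T H)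
    (hs : s ∈ OMinus T H) : 1 - x * s ∈ T.ofUnits :=
  hx.elim (fun hx ↦ R.one_sub_mul_mem hx hs) fun hx ↦ (hx.2 s hs).2

theorem neg_mem_union (R : RigidPair ℓ T H) (hx : x ∈ OMinus T H ∪ OPlus T H) :
    -x ∈ OMinus T H ∪ OPlus T H := by
  refine hx.imp R.neg_mem_OMinus fun hx ↦
    ⟨(neg_mem_ofUnits_iff (R.le R.neg_one_mem)).mpr hx.1, fun s hs ↦ ?_⟩
  rw [neg_mul]
  exact R.neg_mem_OMinus (hx.2 s hs)

theorem one_sub_mem_OPlus (R : RigidPair ℓ T H) (hx : x ∈ OMinus T H ∪ OPlus T H)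
    (hx' : 1 - x ∈ H.ofUnits) : 1 - x ∈ OPlus T H := by
  refine ⟨hx', fun s hs ↦ ⟨mt (mul_mem_ofUnits_iff_right hx').mp hs.1, ?_⟩⟩
  convert mul_mem hs.2
    (R.one_sub_mul_mem_of_mem_union (R.neg_mem_union hx) (R.div_one_sub_mem_OMinus hs)) using 1
  have := one_sub_ne_zero_of_notMem_ofUnits hs.1
  field_simp
  ring

theorem one_sub_mem_union (R : RigidPair ℓ T H) (hx : x ∈ OMinus T H ∪ OPlus T H) :
    1 - x ∈ OMinus T H ∪ OPlus T H := by
  by_cases hx' : 1 - x ∈ H.ofUnits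
  · exact .inr (R.one_sub_mem_OPlus hx hx')
  refine .inl ⟨hx', (R.one_sub_mem_or_one_sub_div_mem hx').resolve_right fun h ↦ hx' ?_⟩
  rw [sub_sub_cancel] at h
  have hxH : x ∈ H.ofUnits :=
    hx.elim (fun hx ↦ absurd (R.ofUnits_le hx.2) hx') fun hx ↦ hx.1
  rw [← div_div_cancel₀ (ne_zero_of_mem_ofUnits hxH) (b := 1 - x)]
  exact div_mem_ofUnits hxH (R.ofUnits_le h)

theorem mul_mem_union (R : RigidPair ℓ T H) (hx : x ∈ OMinus T H ∪ OPlus T H)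
    (hy : y ∈ OMinus T H ∪ OPlus T H) : x * y ∈ OMinus T H ∪ OPlus T H := by
  rcases hx with hx | hx <;> rcases hy with hy | hy
  · by_cases hxy : x * y ∈ H.ofUnits
    · exact .inr (R.mul_mem_OPlus_of_mem_OMinus hx hy hxy)
    · exact .inl (R.mul_mem_OMinus hx hy hxy)
  · exact .inl (mul_comm y x ▸ hy.2 x hx)
  · exact .inl (hx.2 y hy)
  · exact .inr ⟨mul_mem hx.1 hy.1, fun s hs ↦ mul_assoc x y s ▸ hx.2 _ (hy.2 s hs)⟩

theorem mem_union_or_inv_mem_union (R : RigidPair ℓ T H) (x : F) :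
    x ∈ OMinus T H ∪ OPlus T H ∨ x⁻¹ ∈ OMinus T H ∪ OPlus T H := by
  by_cases hx : x ∈ H.ofUnits
  · exact (R.mem_OPlus_or_inv_mem_OPlus hx).imp .inr .inr
  · exact (R.mem_OMinus_or_inv_mem_OMinus hx).imp .inl .inl

theorem add_mem_union (R : RigidPair ℓ T H) (hx : x ∈ OMinus T H ∪ OPlus T H)
    (hy : y ∈ OMinus T H ∪ OPlus T H) : x + y ∈ OMinus T H ∪ OPlus T H := by
  wlog hyx : y / x ∈ OMinus T H ∪ OPlus T H generalizing x y
  · rw [add_comm]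
    refine this hy hx ?_
    rw [← inv_div]
    exact (R.mem_union_or_inv_mem_union (y / x)).resolve_left hyx
  rcases eq_or_ne x 0 with rfl | hx₀
  · rwa [zero_add]
  convert R.mul_mem_union hx (R.one_sub_mem_union (R.neg_mem_union hyx)) using 1
  rw [sub_neg_eq_add, mul_add, mul_one, mul_div_cancel₀ _ hx₀]

/-- The valuation ring `O(T, H) = O⁻(T, H) ∪ O⁺(T, H)` attached to a rigid pair. -/
def valuationSubring (R : RigidPair ℓ T H) : ValuationSubring F where
  carrier := OMinus T H ∪ OPlus T H
  mul_mem' := R.mul_mem_union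
  one_mem' := .inr ⟨one_mem _, fun s hs ↦ (one_mul s).symm ▸ hs⟩
  add_mem' := R.add_mem_union
  zero_mem' := .inl zero_mem_OMinus
  neg_mem' := R.neg_mem_union
  mem_or_inv_mem' := R.mem_union_or_inv_mem_union

theorem mem_valuationSubring (R : RigidPair ℓ T H) :
    x ∈ R.valuationSubring ↔ x ∈ OMinus T H ∪ OPlus T H :=
  Iff.rfl

theorem one_sub_mem_of_valuation_lt_one (R : RigidPair ℓ T H)
    (hx : R.valuationSubring.valuation x < 1) : 1 - x ∈ T.ofUnits := by
  rcases R.mem_valuationSubring.mp ((R.valuationSubring.valuation_le_one_iff x).mp hx.le)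
    with hxO | hxO
  · exact hxO.2
  have hx₀ := ne_zero_of_mem_ofUnits hxO.1
  have hx' : x⁻¹ ∉ R.valuationSubring :=
    (R.valuationSubring.mem_nonunits_iff_or.mp hx).resolve_left hx₀
  obtain ⟨s, hs, hs₀, hxs⟩ :=
    R.exists_inv_mul_mem_OMinus (inv_mem_ofUnits hxO.1) fun h ↦ hx' (.inr h)
  convert R.one_sub_mul_mem hs hxs using 2
  field_simp

theorem unitGroup_valuationSubring_le (R : RigidPair ℓ T H) :
    R.valuationSubring.unitGroup ≤ H := by
  intro u hu
  rw [ValuationSubring.mem_unitGroup_iff] at hu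
  by_contra huH
  rw [← coe_mem_ofUnits_iff] at huH
  have hu₁ : (u : F) ∈ R.valuationSubring :=
    (R.valuationSubring.valuation_le_one_iff _).mp hu.le
  have hu₂ : (u : F)⁻¹ ∈ R.valuationSubring :=
    (R.valuationSubring.valuation_le_one_iff _).mp (by rw [map_inv₀, hu, inv_one])
  have hu₁' := hu₁.resolve_right fun h ↦ huH h.1
  have hu₂' := hu₂.resolve_right fun h ↦ huH (inv_mem_ofUnits_iff.mp h.1)
  exact R.inv_notMem_OMinus u.ne_zero hu₁' hu₂'

end RigidPair

end RigidPair

section ValuationSubgroups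

variable {K : Type*} [Field K] {ℓ : ℕ} {O : ValuationSubring K} {x y : K}

/-- The subgroup `O_vˣ K^{×ℓ}` of `Kˣ`, consisting of the elements whose value is an `ℓ`-th power in
the value group. For `v ∈ 𝒱_K` it turns out to be `𝐇(𝔘_v¹)`. -/
noncomputable def unitPow (ℓ : ℕ) (O : ValuationSubring K) : Subgroup Kˣ :=
  O.unitGroup ⊔ powSub K ℓ

theorem pow_mem_unitPow (u : Kˣ) : u ^ ℓ ∈ unitPow ℓ O :=
  Subgroup.mem_sup_right ⟨u, rfl⟩

theorem mem_unitPow_iff {u : Kˣ} :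
    u ∈ unitPow ℓ O ↔ ∃ z : Kˣ, O.valuation u = O.valuation z ^ ℓ := by
  constructor
  · intro hu
    obtain ⟨a, ha, _, ⟨z, rfl⟩, rfl⟩ := Subgroup.mem_sup.mp hu
    exact ⟨z, by simp [(O.mem_unitGroup_iff a).mp ha]⟩
  · rintro ⟨z, hz⟩
    rw [← div_mul_cancel u (z ^ ℓ)]
    refine Subgroup.mul_mem_sup ((O.mem_unitGroup_iff _).mpr ?_) ⟨z, rfl⟩
    simp [hz]

theorem mem_unitPow_of_valuation_eq_one (hx : O.valuation x = 1) : x ∈ (unitPow ℓ O).ofUnits := by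
  have hx₀ : x ≠ 0 := O.valuation.ne_zero_iff.mp (hx ▸ one_ne_zero)
  exact (mk0_mem_iff hx₀).mp (Subgroup.mem_sup_left ((O.mem_unitGroup_iff _).mpr hx))

theorem mem_unitPow_congr (hxy : O.valuation x = O.valuation y) (hy : y ∈ (unitPow ℓ O).ofUnits) :
    x ∈ (unitPow ℓ O).ofUnits := by
  have hy₀ := ne_zero_of_mem_ofUnits hy
  rw [← div_mul_cancel₀ x hy₀]
  refine mul_mem (mem_unitPow_of_valuation_eq_one ?_) hy
  rw [map_div₀, hxy, div_self (O.valuation.ne_zero_iff.mpr hy₀)]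

theorem pow_mem_U1v (u : Kˣ) : u ^ ℓ ∈ U1v ℓ O :=
  Subgroup.mem_sup_right ⟨u, rfl⟩

theorem neg_one_mem_U1v : -1 ∈ U1v ℓ O :=
  Subgroup.mem_sup_left (Subgroup.mem_sup_right (Subgroup.subset_closure rfl))

theorem mem_U1v_of_valuation_sub_one_lt {u : Kˣ} (hu : O.valuation ((u : K) - 1) < 1) :
    u ∈ U1v ℓ O :=
  Subgroup.mem_sup_left (Subgroup.mem_sup_left (Subgroup.subset_closure ⟨_, hu, by ring⟩))

theorem one_sub_mem_U1v (hx : O.valuation x < 1) : 1 - x ∈ (U1v ℓ O).ofUnits := by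
  have hx₀ : 1 - x ≠ 0 :=
    O.valuation.ne_zero_iff.mp (O.valuation.map_one_sub_of_lt hx ▸ one_ne_zero)
  refine (mk0_mem_iff hx₀).mp (mem_U1v_of_valuation_sub_one_lt ?_)
  simpa using hx

theorem U1v_le {M : Subgroup Kˣ} (hpow : ∀ u : Kˣ, u ^ ℓ ∈ M) (hneg : -1 ∈ M)
    (hM : ∀ x : K, O.valuation x < 1 → 1 - x ∈ M.ofUnits) : U1v ℓ O ≤ M := by
  refine sup_le (sup_le ((Subgroup.closure_le _).mpr ?_) ((Subgroup.closure_le _).mpr ?_)) ?_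
  · rintro u ⟨a, ha, hu⟩
    rw [SetLike.mem_coe, ← coe_mem_ofUnits_iff, hu, ← sub_neg_eq_add]
    exact hM (-a) (by rwa [Valuation.map_neg])
  · exact Set.singleton_subset_iff.mpr hneg
  · rintro _ ⟨u, rfl⟩
    exact hpow u

theorem U1v_le_unitPow : U1v ℓ O ≤ unitPow ℓ O :=
  U1v_le pow_mem_unitPow (Subgroup.mem_sup_left ((O.mem_unitGroup_iff _).mpr (by simp)))
    fun _ hx ↦ mem_unitPow_of_valuation_eq_one (O.valuation.map_one_sub_of_lt hx)

theorem NonrigidAt.valuation_eq_one (hx : NonrigidAt (U1v ℓ O) x) : O.valuation x = 1 := by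
  refine le_antisymm (not_lt.mp fun h ↦ ?_)
    (not_lt.mp fun h ↦ hx.one_sub_notMem (one_sub_mem_U1v h))
  refine (hx.inv neg_one_mem_U1v).one_sub_notMem (one_sub_mem_U1v ?_)
  rw [map_inv₀]
  exact inv_lt_one_of_one_lt₀ h

theorem Hbold_U1v_le (hℓ : ℓ.Prime) : Hbold (U1v ℓ O) ≤ unitPow ℓ O :=
  (Hbold_le_iff hℓ pow_mem_U1v U1v_le_unitPow).mpr fun _ hx ↦
    mem_unitPow_of_valuation_eq_one hx.valuation_eq_one

theorem Hbold_U1v_eq_unitPow_iff (hℓ : ℓ.Prime) :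
    Hbold (U1v ℓ O) = unitPow ℓ O ↔ O.unitGroup ≤ Hbold (U1v ℓ O) := by
  refine ⟨fun h ↦ h ▸ le_sup_left, fun h ↦ (Hbold_U1v_le hℓ).antisymm (sup_le h ?_)⟩
  rintro _ ⟨u, rfl⟩
  exact le_Hbold (pow_mem_U1v u)

theorem one_sub_mem_U1v_iff (hx : x ∉ (unitPow ℓ O).ofUnits) :
    1 - x ∈ (U1v ℓ O).ofUnits ↔ O.valuation x < 1 := by
  refine ⟨fun h ↦ ?_, one_sub_mem_U1v⟩
  by_contra! hx₁
  have hx₂ : 1 < O.valuation x :=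
    hx₁.lt_of_ne fun h₁ ↦ hx (mem_unitPow_of_valuation_eq_one h₁.symm)
  refine hx (mem_unitPow_congr ?_ (Subgroup.ofUnits_mono U1v_le_unitPow h))
  exact (Valuation.map_sub_eq_of_lt_right _ (by rwa [map_one])).symm

end ValuationSubgroups

section SmallSub

variable {F : Type*} [Field F] {M : Subgroup Fˣ} {ℓ : ℕ}

theorem smallSub_le (hpow : ∀ u : Fˣ, u ^ ℓ ∈ M) (hneg : -1 ∈ M) : smallSub F ℓ ≤ M := by
  refine sup_le ?_ ((Subgroup.closure_le _).mpr (Set.singleton_subset_iff.mpr hneg))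
  rintro _ ⟨u, rfl⟩
  exact hpow u

theorem pow_mem_smallSub (u : Fˣ) : u ^ ℓ ∈ smallSub F ℓ :=
  Subgroup.mem_sup_left ⟨u, rfl⟩

theorem neg_one_mem_smallSub : -1 ∈ smallSub F ℓ :=
  Subgroup.mem_sup_right (Subgroup.subset_closure rfl)

end SmallSub

section Residue

open IsLocalRing

variable {K : Type*} [Field K] {ℓ : ℕ} {O : ValuationSubring K} {x : K} {u : Oˣ}

/-- The reduction homomorphism from the units of `O_v` to those of the residue field. -/
noncomputable abbrev residueUnits (O : ValuationSubring K) : Oˣ →* (ResidueField O)ˣ :=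
  Units.map (residue O : O →* ResidueField O)

/-- The inclusion of the units of `O_v` in `Kˣ`, with image `O.unitGroup`. -/
abbrev coeUnits (O : ValuationSubring K) : Oˣ →* Kˣ :=
  Units.map (O.subtype : O →* K)

theorem residueUnits_surjective : Function.Surjective (residueUnits O) :=
  surjective_units_map_of_local_ringHom _ residue_surjective inferInstance

theorem exists_unit_coe_eq (hx : O.valuation x = 1) : ∃ u : Oˣ, (u : K) = x :=
  ⟨((O.valuation_eq_one_iff ⟨x, (O.valuation_le_one_iff x).mp hx.le⟩).mpr hx).unit, rfl⟩

theorem range_coeUnits : (coeUnits O).range = O.unitGroup := by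
  ext x
  rw [O.mem_unitGroup_iff]
  constructor
  · rintro ⟨u, rfl⟩
    exact O.valuation_unit u
  · intro hx
    obtain ⟨u, hu⟩ := exists_unit_coe_eq hx
    exact ⟨u, Units.ext hu⟩

theorem residueUnits_eq_one_iff : residueUnits O u = 1 ↔ O.valuation ((u : K) - 1) < 1 := by
  rw [Units.ext_iff, Units.coe_map, Units.val_one, ← sub_eq_zero]
  change residue O u - 1 = 0 ↔ O.valuation ((u - 1 : O) : K) < 1
  rw [← O.valuation_lt_one_iff, ← residue_eq_zero_iff, map_sub, map_one]

theorem residueUnits_neg_one : residueUnits O (-1) = -1 :=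
  Units.map_neg_one (residue O)

theorem coeUnits_neg_one : coeUnits O (-1) = -1 :=
  Units.map_neg_one O.subtype

theorem smallSub_le_map_comap_U1v :
    smallSub (ResidueField O) ℓ ≤ ((U1v ℓ O).comap (coeUnits O)).map (residueUnits O) := by
  refine smallSub_le (fun x ↦ ?_) ⟨-1, ?_, residueUnits_neg_one⟩
  · obtain ⟨u, rfl⟩ := residueUnits_surjective x
    exact ⟨u ^ ℓ, by simpa using pow_mem_U1v (coeUnits O u), map_pow _ _ _⟩
  · rw [SetLike.mem_coe, Subgroup.mem_comap, coeUnits_neg_one]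
    exact neg_one_mem_U1v

theorem U1v_le_map_comap_smallSub :
    U1v ℓ O ≤ ((smallSub (ResidueField O) ℓ).comap (residueUnits O)).map (coeUnits O) ⊔
      powSub K ℓ := by
  refine U1v_le (fun u ↦ Subgroup.mem_sup_right ⟨u, rfl⟩)
    (Subgroup.mem_sup_left ⟨-1, ?_, coeUnits_neg_one⟩) fun x hx ↦ ?_
  · rw [SetLike.mem_coe, Subgroup.mem_comap, residueUnits_neg_one]
    exact neg_one_mem_smallSub
  · obtain ⟨u, hu⟩ := exists_unit_coe_eq (O.valuation.map_one_sub_of_lt hx)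
    have hu₁ : residueUnits O u = 1 := by
      rw [residueUnits_eq_one_iff, hu]
      simpa using hx
    exact Subgroup.mem_ofUnits _
      (Subgroup.mem_sup_left ⟨u, Subgroup.mem_comap.mpr (hu₁ ▸ one_mem _), rfl⟩) hu

theorem comap_residueUnits_smallSub (hℓ : ℓ ≠ 0) :
    (smallSub (ResidueField O) ℓ).comap (residueUnits O) = (U1v ℓ O).comap (coeUnits O) := by
  refine le_antisymm (fun u hu ↦ ?_) fun u hu ↦ ?_
  · obtain ⟨w, hw, hwu⟩ := smallSub_le_map_comap_U1v hu
    have huw : residueUnits O (u / w) = 1 := by rw [map_div, hwu, div_self']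
    have huw' : u / w ∈ (U1v ℓ O).comap (coeUnits O) :=
      mem_U1v_of_valuation_sub_one_lt (residueUnits_eq_one_iff.mp huw)
    exact div_mul_cancel u w ▸ mul_mem huw' hw
  · have hu' := U1v_le_map_comap_smallSub (Subgroup.mem_comap.mp hu)
    obtain ⟨_, ⟨s, hs, rfl⟩, _, ⟨z, rfl⟩, hsz⟩ := Subgroup.mem_sup.mp hu'
    have hz : z ^ ℓ = coeUnits O (u / s) := by
      rw [map_div, ← hsz, mul_div_cancel_left, powMonoidHom_apply]
    have hz₁ : O.valuation z = 1 := by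
      rw [← pow_eq_one_iff_of_nonneg zero_le hℓ, ← map_pow, ← Units.val_pow_eq_pow_val, hz]
      exact O.valuation_unit (u / s)
    obtain ⟨w, rfl⟩ : z ∈ (coeUnits O).range := by
      rw [range_coeUnits]
      exact (O.mem_unitGroup_iff z).mpr hz₁
    have hwu : w ^ ℓ = u / s :=
      Units.map_injective O.subtype_injective ((map_pow (coeUnits O) w ℓ).trans hz)
    have hus : u / s ∈ (smallSub (ResidueField O) ℓ).comap (residueUnits O) := by
      rw [← hwu, Subgroup.mem_comap, map_pow]
      exact pow_mem_smallSub _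
    exact div_mul_cancel u s ▸ mul_mem hus hs

theorem residue_mem_smallSub_iff (hℓ : ℓ ≠ 0) :
    residue O u ∈ (smallSub (ResidueField O) ℓ).ofUnits ↔ (u : K) ∈ (U1v ℓ O).ofUnits := by
  change (residueUnits O u : ResidueField O) ∈ _ ↔ (coeUnits O u : K) ∈ _
  rw [coe_mem_ofUnits_iff, coe_mem_ofUnits_iff, ← Subgroup.mem_comap, ← Subgroup.mem_comap,
    comap_residueUnits_smallSub hℓ]

theorem nonrigidAt_residue_iff (hℓ : ℓ ≠ 0) :
    NonrigidAt (smallSub (ResidueField O) ℓ) (residue O u) ↔ NonrigidAt (U1v ℓ O) (u : K) := by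
  by_cases hu : IsUnit (1 - u : O)
  · obtain ⟨w, hw⟩ := hu
    have hres (k : ℤ) : residue O u ^ k * (1 - residue O u) = residue O (u ^ k * w : Oˣ) := by
      rw [← map_one (residue O), ← map_sub, ← hw]
      change ((residueUnits O u : (ResidueField O)ˣ) : ResidueField O) ^ k * residueUnits O w =
        residueUnits O (u ^ k * w)
      rw [map_mul, map_zpow, Units.val_mul, Units.val_zpow_eq_zpow_val]
    have hcoe (k : ℤ) : (u : K) ^ k * (1 - u) = ((u ^ k * w : Oˣ) : K) := by
      have hw' : (1 - u : K) = w := congrArg Subtype.val hw.symm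
      rw [hw']
      change ((coeUnits O u : Kˣ) : K) ^ k * coeUnits O w = coeUnits O (u ^ k * w)
      rw [map_mul, map_zpow, Units.val_mul, Units.val_zpow_eq_zpow_val]
    simp only [NonrigidAt, hres, hcoe, residue_mem_smallSub_iff hℓ]
  · have hv : O.valuation (1 - u : K) < 1 := (O.valuation_lt_one_iff (1 - u)).mp hu
    refine iff_of_false (fun h ↦ h.one_sub_ne_zero ?_) fun h ↦ h.notMem ?_
    · rw [← map_one (residue O), ← map_sub, residue_eq_zero_iff]
      exact hu
    · exact sub_sub_cancel (1 : K) u ▸ one_sub_mem_U1v hv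

theorem isRigid_smallSub_iff (hℓ : ℓ.Prime) :
    IsRigid (smallSub (ResidueField O) ℓ) ↔ IsRigid (U1v ℓ O) := by
  rw [isRigid_iff hℓ pow_mem_smallSub, isRigid_iff hℓ pow_mem_U1v]
  constructor <;> intro h x hx
  · obtain ⟨u, rfl⟩ := exists_unit_coe_eq hx.valuation_eq_one
    exact h _ ((nonrigidAt_residue_iff hℓ.ne_zero).mpr hx)
  · obtain ⟨u, hu⟩ := residueUnits_surjective (Units.mk0 x hx.ne_zero)
    obtain rfl : residue O u = x := congrArg Units.val hu
    exact h _ ((nonrigidAt_residue_iff hℓ.ne_zero).mp hx)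

theorem comap_residueUnits_Hbold (hℓ : ℓ.Prime) :
    (Hbold (smallSub (ResidueField O) ℓ)).comap (residueUnits O) =
      (Hbold (U1v ℓ O)).comap (coeUnits O) := by
  have hcomap := comap_residueUnits_smallSub (O := O) hℓ.ne_zero
  refine le_antisymm (fun u hu ↦ ?_) fun u hu ↦ ?_
  · have hle : Hbold (smallSub (ResidueField O) ℓ) ≤
        ((Hbold (U1v ℓ O)).comap (coeUnits O)).map (residueUnits O) := by
      refine (Hbold_le_iff hℓ pow_mem_smallSub (smallSub_le_map_comap_U1v.trans
        (Subgroup.map_mono (Subgroup.comap_mono le_Hbold)))).mpr fun x hx ↦ ?_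
      obtain ⟨u, hu⟩ := residueUnits_surjective (Units.mk0 x hx.ne_zero)
      obtain rfl : residue O u = x := congrArg Units.val hu
      have hu' := ((nonrigidAt_residue_iff hℓ.ne_zero).mp hx).mem_Hbold hℓ pow_mem_U1v
      exact Subgroup.mem_ofUnits _ ⟨u, (coe_mem_ofUnits_iff (u := coeUnits O u)).mp hu', rfl⟩ rfl
    obtain ⟨w, hw, hwu⟩ := hle hu
    have huw : u / w ∈ (smallSub (ResidueField O) ℓ).comap (residueUnits O) := by
      rw [Subgroup.mem_comap, map_div, hwu, div_self']
      exact one_mem _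
    rw [hcomap] at huw
    exact div_mul_cancel u w ▸ mul_mem (Subgroup.comap_mono le_Hbold huw) hw
  · have hle : Hbold (U1v ℓ O) ≤ U1v ℓ O ⊔
        ((Hbold (smallSub (ResidueField O) ℓ)).comap (residueUnits O)).map (coeUnits O) := by
      refine (Hbold_le_iff hℓ pow_mem_U1v le_sup_left).mpr fun x hx ↦ ?_
      obtain ⟨u, rfl⟩ := exists_unit_coe_eq hx.valuation_eq_one
      have hu' := ((nonrigidAt_residue_iff hℓ.ne_zero).mpr hx).mem_Hbold hℓ pow_mem_smallSub
      exact Subgroup.mem_ofUnits _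
        (Subgroup.mem_sup_right ⟨u, (coe_mem_ofUnits_iff (u := residueUnits O u)).mp hu', rfl⟩) rfl
    obtain ⟨t, ht, _, ⟨s, hs, rfl⟩, hts⟩ := Subgroup.mem_sup.mp (hle hu)
    have hus : u / s ∈ (U1v ℓ O).comap (coeUnits O) := by
      rwa [Subgroup.mem_comap, map_div, ← hts, mul_div_cancel_right]
    rw [← hcomap] at hus
    exact div_mul_cancel u s ▸ mul_mem (Subgroup.comap_mono le_Hbold hus) hs

theorem Hbold_smallSub_eq_top_iff (hℓ : ℓ.Prime) :
    Hbold (smallSub (ResidueField O) ℓ) = ⊤ ↔ Hbold (U1v ℓ O) = unitPow ℓ O := by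
  rw [Hbold_U1v_eq_unitPow_iff hℓ, ← range_coeUnits, MonoidHom.range_eq_map,
    Subgroup.map_le_iff_le_comap, ← comap_residueUnits_Hbold hℓ, top_le_iff,
    ← Subgroup.comap_top (residueUnits O),
    (Subgroup.comap_injective residueUnits_surjective).eq_iff]

theorem mem_VK_iff (hℓ : ℓ.Prime) :
    O ∈ VK K ℓ ↔ NoLDivConvex ℓ O ∧ ¬IsRigid (U1v ℓ O) ∧ Hbold (U1v ℓ O) = unitPow ℓ O := by
  rw [← Hbold_smallSub_eq_top_iff hℓ, ← isRigid_smallSub_iff hℓ]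
  refine and_congr_right fun _ ↦ and_congr_left fun htop ↦ not_congr ⟨fun _ ↦ ?_, fun hrigid ↦ ?_⟩
  · exact isRigid_of_isCyclic_quotient
  · have hS : smallSub (ResidueField O) ℓ = ⊤ :=
      ((Hbold_eq_self_iff hℓ pow_mem_smallSub).mpr hrigid).symm.trans htop
    have := QuotientGroup.subsingleton_iff.mpr hS
    infer_instance

end Residue

section Convex

variable {K : Type*} [Field K] {ℓ : ℕ} {O : ValuationSubring K} {D : Subgroup Kˣ}

/-- `D` is the preimage in `Kˣ` of a convex subgroup of the value group `Kˣ / O.unitGroup`. -/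
structure IsConvexSubgroup (O : ValuationSubring K) (D : Subgroup Kˣ) : Prop where
  unitGroup_le : O.unitGroup ≤ D
  mem_of_le : ∀ x ∈ D, ∀ y : Kˣ, 1 ≤ O.valuation y → O.valuation y ≤ O.valuation x → y ∈ D

theorem IsConvexSubgroup.mem_of_pow_mem (hD : IsConvexSubgroup O D) (hℓ : ℓ ≠ 0) {z : Kˣ}
    (hz : z ^ ℓ ∈ D) : z ∈ D := by
  wlog hz₁ : 1 ≤ O.valuation z generalizing z
  · refine inv_mem_iff.mp (this (inv_pow z ℓ ▸ inv_mem hz) ?_)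
    rw [Units.val_inv_eq_inv_val, map_inv₀]
    exact (one_le_inv₀ (O.valuation.pos_iff.mpr z.ne_zero)).mpr (not_le.mp hz₁).le
  refine hD.mem_of_le _ hz z hz₁ ?_
  rw [Units.val_pow_eq_pow_val, map_pow]
  exact le_self_pow₀ hz₁ hℓ

theorem noLDivConvex_iff (hℓ : ℓ ≠ 0) :
    NoLDivConvex ℓ O ↔ ∀ D, IsConvexSubgroup O D → D ≤ unitPow ℓ O → D = O.unitGroup := by
  constructor
  · refine fun hO D hD hDV ↦ hO D hD.unitGroup_le hD.mem_of_le fun x hx ↦ ?_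
    obtain ⟨z, hz⟩ := mem_unitPow_iff.mp (hDV hx)
    have hzx : z ^ ℓ / x ∈ O.unitGroup := (O.mem_unitGroup_iff _).mpr (by simp [hz])
    have hzD : z ^ ℓ ∈ D := div_mul_cancel (z ^ ℓ) x ▸ mul_mem (hD.unitGroup_le hzx) hx
    exact ⟨z, hD.mem_of_pow_mem hℓ hzD, hzx⟩
  · refine fun hO D hOD hconv hdiv ↦ hO D ⟨hOD, hconv⟩ fun x hx ↦ ?_
    obtain ⟨z, -, hz⟩ := hdiv x hx
    rw [← div_div_cancel (z ^ ℓ) x]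
    exact div_mem (pow_mem_unitPow z) (Subgroup.mem_sup_left hz)

/-- Every element of the value group between `1` and `γ` is an `ℓ`-th power. -/
def IsPowBelow (ℓ : ℕ) (O : ValuationSubring K) (γ : O.ValueGroup) : Prop :=
  ∀ y : Kˣ, 1 ≤ O.valuation y → O.valuation y ≤ γ → y ∈ unitPow ℓ O

theorem isPowBelow_of_le_one {γ : O.ValueGroup} (hγ : γ ≤ 1) : IsPowBelow ℓ O γ :=
  fun _ hy hyγ ↦
    coe_mem_ofUnits_iff.mp (mem_unitPow_of_valuation_eq_one ((hyγ.trans hγ).antisymm hy))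

theorem IsPowBelow.mul {d : Kˣ} {γ : O.ValueGroup} (hd : IsPowBelow ℓ O (O.valuation d))
    (hγ : IsPowBelow ℓ O γ) : IsPowBelow ℓ O (O.valuation d * γ) := by
  intro y hy hyd
  rcases le_total (O.valuation y) (O.valuation d) with hyd' | hdy
  · exact hd y hy hyd'
  rcases le_total 1 (O.valuation d) with hd₁ | hd₁
  · have hd₀ : 0 < O.valuation d := zero_lt_one.trans_le hd₁
    have hval : O.valuation ((y / d : Kˣ) : K) = O.valuation y / O.valuation d := by simp
    rw [← div_mul_cancel y d]
    refine mul_mem (hγ _ ?_ ?_) (hd d hd₁ le_rfl)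
    · rwa [hval, one_le_div₀ hd₀]
    · rwa [hval, div_le_iff₀' hd₀]
  · exact hγ y hy (hyd.trans (mul_le_of_le_one_left' hd₁))

/-- The preimage in `Kˣ` of the largest convex subgroup of the value group consisting of `ℓ`-th
powers. -/
def convexCore (ℓ : ℕ) (O : ValuationSubring K) : Subgroup Kˣ where
  carrier := {d | IsPowBelow ℓ O (O.valuation d) ∧ IsPowBelow ℓ O (O.valuation ↑d⁻¹)}
  one_mem' := by
    constructor <;> exact isPowBelow_of_le_one (by simp)
  mul_mem' := by
    rintro a b ⟨ha, ha'⟩ ⟨hb, hb'⟩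
    constructor
    · simpa using ha.mul hb
    · simpa [mul_comm] using ha'.mul hb'
  inv_mem' := by
    rintro a ⟨ha, ha'⟩
    exact ⟨ha', by rwa [inv_inv]⟩

theorem isConvexSubgroup_convexCore : IsConvexSubgroup O (convexCore ℓ O) where
  unitGroup_le u hu := by
    constructor <;> refine isPowBelow_of_le_one (le_of_eq ?_)
    · exact (O.mem_unitGroup_iff u).mp hu
    · exact (O.mem_unitGroup_iff _).mp (inv_mem hu)
  mem_of_le x hx y hy hyx := by
    refine ⟨fun z hz hzy ↦ hx.1 z hz (hzy.trans hyx), isPowBelow_of_le_one ?_⟩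
    rw [Units.val_inv_eq_inv_val, map_inv₀]
    exact inv_le_one_of_one_le₀ hy

theorem convexCore_le_unitPow : convexCore ℓ O ≤ unitPow ℓ O := by
  rintro d ⟨hd, hd'⟩
  rcases le_total 1 (O.valuation d) with h | h
  · exact hd d h le_rfl
  · refine inv_mem_iff.mp (hd' _ ?_ le_rfl)
    rw [Units.val_inv_eq_inv_val, map_inv₀]
    exact (one_le_inv₀ (O.valuation.pos_iff.mpr d.ne_zero)).mpr h

theorem exists_notMem_unitPow_of_one_lt (hℓ : ℓ ≠ 0) (hO : NoLDivConvex ℓ O) {x : K}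
    (hx : 1 < O.valuation x) :
    ∃ y ∉ (unitPow ℓ O).ofUnits, 1 < O.valuation y ∧ O.valuation y ≤ O.valuation x := by
  have hx₀ : x ≠ 0 := O.valuation.ne_zero_iff.mp (zero_lt_one.trans hx).ne'
  have hcore : Units.mk0 x hx₀ ∉ convexCore ℓ O := by
    rw [(noLDivConvex_iff hℓ).mp hO _ isConvexSubgroup_convexCore convexCore_le_unitPow,
      O.mem_unitGroup_iff]
    exact hx.ne'
  contrapose! hcore
  refine ⟨fun y hy hyx ↦ ?_, isPowBelow_of_le_one ?_⟩
  · by_contra hyV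
    have hyV' : (y : K) ∉ (unitPow ℓ O).ofUnits := mt coe_mem_ofUnits_iff.mp hyV
    refine (hcore y hyV' (hy.lt_of_ne fun h ↦ hyV' ?_)).not_ge hyx
    exact mem_unitPow_of_valuation_eq_one h.symm
  · rw [Units.val_inv_eq_inv_val, map_inv₀]
    exact inv_le_one_of_one_le₀ hx.le

theorem exists_notMem_unitPow_of_lt_one (hℓ : ℓ ≠ 0) (hO : NoLDivConvex ℓ O) {z : K} (hz₀ : z ≠ 0)
    (hz : O.valuation z < 1) :
    ∃ w ∉ (unitPow ℓ O).ofUnits, O.valuation w < 1 ∧ O.valuation z ≤ O.valuation w := by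
  have hz' : 1 < O.valuation z⁻¹ := by
    rw [map_inv₀]
    exact (one_lt_inv₀ (O.valuation.pos_iff.mpr hz₀)).mpr hz
  obtain ⟨y, hyV, hy, hyz⟩ := exists_notMem_unitPow_of_one_lt hℓ hO hz'
  refine ⟨y⁻¹, mt inv_mem_ofUnits_iff.mp hyV, ?_, ?_⟩
  · rw [map_inv₀]
    exact inv_lt_one_of_one_lt₀ hy
  · rw [map_inv₀] at hyz ⊢
    exact (le_inv_comm₀ (zero_lt_one.trans hy) (O.valuation.pos_iff.mpr hz₀)).mp hyz

-- If `z` itself lies in `unitPow ℓ O`, write `1 - z = (1 - w) * (1 - q)` with `w` and `q` outside.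
theorem U1v_le_of_forall_notMem_unitPow (hℓ : ℓ ≠ 0) (hO : NoLDivConvex ℓ O) {M : Subgroup Kˣ}
    (hpow : ∀ u : Kˣ, u ^ ℓ ∈ M) (hneg : -1 ∈ M)
    (hM : ∀ z : K, z ∉ (unitPow ℓ O).ofUnits → O.valuation z < 1 → 1 - z ∈ M.ofUnits) :
    U1v ℓ O ≤ M := by
  refine U1v_le hpow hneg fun z hz ↦ ?_
  by_cases hzV : z ∉ (unitPow ℓ O).ofUnits
  · exact hM z hzV hz
  rw [not_not] at hzV
  obtain ⟨w, hwV, hw, hzw⟩ :=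
    exists_notMem_unitPow_of_lt_one hℓ hO (ne_zero_of_mem_ofUnits hzV) hz
  have hzw' : O.valuation z < O.valuation w :=
    hzw.lt_of_ne fun h ↦ hwV (mem_unitPow_congr h.symm hzV)
  have hw₁ := O.valuation.map_one_sub_of_lt hw
  have hw₀ : 1 - w ≠ 0 := O.valuation.ne_zero_iff.mp (hw₁ ▸ one_ne_zero)
  have hq : O.valuation ((z - w) / (1 - w)) = O.valuation w := by
    rw [map_div₀, hw₁, div_one, Valuation.map_sub_eq_of_lt_right _ hzw']
  convert mul_mem (hM w hwV hw)
    (hM _ (fun h ↦ hwV (mem_unitPow_congr hq.symm h)) (hq ▸ hw)) using 1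
  field_simp
  ring

end Convex

section Main

variable {K : Type*} [Field K] {ℓ : ℕ} {T H : Subgroup Kˣ} {O : ValuationSubring K} {x : K}

theorem mem_OMinus_U1v_iff :
    x ∈ OMinus (U1v ℓ O) (unitPow ℓ O) ↔ x ∉ (unitPow ℓ O).ofUnits ∧ O.valuation x < 1 :=
  and_congr_right one_sub_mem_U1v_iff

theorem mem_OPlus_U1v_iff (hℓ : ℓ ≠ 0) (hO : NoLDivConvex ℓ O) :
    x ∈ OPlus (U1v ℓ O) (unitPow ℓ O) ↔ x ∈ (unitPow ℓ O).ofUnits ∧ O.valuation x ≤ 1 := by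
  refine and_congr_right fun hxV ↦ ⟨fun h ↦ ?_, fun hx s hs ↦ ?_⟩
  · by_contra! hx
    obtain ⟨y, hyV, hy, hyx⟩ := exists_notMem_unitPow_of_one_lt hℓ hO hx
    have hy₀ : 0 < O.valuation y := zero_lt_one.trans hy
    have hxy : O.valuation (x * y⁻¹) < 1 := (mem_OMinus_U1v_iff.mp <| h y⁻¹ <|
      mem_OMinus_U1v_iff.mpr ⟨mt inv_mem_ofUnits_iff.mp hyV, by
        rw [map_inv₀]
        exact inv_lt_one_of_one_lt₀ hy⟩).2
    rw [map_mul, map_inv₀, ← div_eq_mul_inv, div_lt_one₀ hy₀] at hxy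
    exact hxy.not_ge hyx
  · obtain ⟨hsV, hs⟩ := mem_OMinus_U1v_iff.mp hs
    refine mem_OMinus_U1v_iff.mpr ⟨mt (mul_mem_ofUnits_iff_right hxV).mp hsV, ?_⟩
    rw [map_mul]
    exact (mul_le_of_le_one_left' hx).trans_lt hs

theorem mem_iff_mem_union_U1v (hℓ : ℓ ≠ 0) (hO : NoLDivConvex ℓ O) :
    x ∈ O ↔ x ∈ OMinus (U1v ℓ O) (unitPow ℓ O) ∪ OPlus (U1v ℓ O) (unitPow ℓ O) := by
  rw [Set.mem_union, mem_OMinus_U1v_iff, mem_OPlus_U1v_iff hℓ hO, ← O.valuation_le_one_iff]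
  by_cases hx : x ∈ (unitPow ℓ O).ofUnits
  · simp [hx]
  · have hx₁ : O.valuation x ≠ 1 := mt mem_unitPow_of_valuation_eq_one hx
    simp [hx, hx₁.le_iff_lt]

theorem injOn_U1v_VK (hℓ : ℓ.Prime) : Set.InjOn (U1v ℓ) (VK K ℓ) := by
  intro O₁ h₁ O₂ h₂ h
  obtain ⟨hO₁, -, hH₁⟩ := (mem_VK_iff hℓ).mp h₁
  obtain ⟨hO₂, -, hH₂⟩ := (mem_VK_iff hℓ).mp h₂
  have hV : unitPow ℓ O₁ = unitPow ℓ O₂ := by rw [← hH₁, ← hH₂, h]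
  ext x
  rw [mem_iff_mem_union_U1v hℓ.ne_zero hO₁, mem_iff_mem_union_U1v hℓ.ne_zero hO₂, hV, h]

theorem one_sub_mem_of_Hbold_le_unitPow (hℓ : ℓ.Prime) (hpow : ∀ u : Kˣ, u ^ ℓ ∈ T)
    (hT : Hbold T ≤ unitPow ℓ O) (hxV : x ∉ (unitPow ℓ O).ofUnits) (hx : O.valuation x < 1) :
    1 - x ∈ T.ofUnits := by
  have hTV : T ≤ unitPow ℓ O := le_Hbold.trans hT
  rcases eq_or_ne x 0 with rfl | hx₀
  · exact (sub_zero (1 : K)).symm ▸ one_mem _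
  obtain ⟨k, hk⟩ : ∃ k : ℤ, x ^ k * (1 - x) ∈ T.ofUnits := by
    by_contra! h
    have hxT : NonrigidAt T x := ⟨fun hxT ↦ hxV (Subgroup.ofUnits_mono hTV hxT), h⟩
    exact hxV (Subgroup.ofUnits_mono hT (hxT.mem_Hbold hℓ hpow))
  have hkV : x ^ k ∈ (unitPow ℓ O).ofUnits :=
    (mul_mem_ofUnits_iff_left
      (mem_unitPow_of_valuation_eq_one (O.valuation.map_one_sub_of_lt hx))).mp
      (Subgroup.ofUnits_mono hTV hk)
  have hkℓ : (ℓ : ℤ) ∣ k := by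
    by_contra hkℓ
    exact hxV (mem_ofUnits_of_zpow_mem hℓ pow_mem_unitPow hx₀ hkℓ hkV)
  exact (mul_mem_ofUnits_iff_right (zpow_mem_ofUnits_of_dvd hpow hx₀ hkℓ)).mp hk

theorem U1v_le_of_Hbold_le_unitPow (hℓ : ℓ.Prime) (hO : NoLDivConvex ℓ O)
    (hpow : ∀ u : Kˣ, u ^ ℓ ∈ T) (hneg : -1 ∈ T) (hT : Hbold T ≤ unitPow ℓ O) : U1v ℓ O ≤ T :=
  U1v_le_of_forall_notMem_unitPow hℓ.ne_zero hO hpow hneg fun _ ↦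
    one_sub_mem_of_Hbold_le_unitPow hℓ hpow hT

theorem U1v_mem_TK (hℓ : ℓ.Prime) (hO : O ∈ VK K ℓ) : U1v ℓ O ∈ TK K ℓ := by
  obtain ⟨hdiv, hrigid, hH⟩ := (mem_VK_iff hℓ).mp hO
  refine ⟨pow_mem_U1v, neg_one_mem_U1v,
    fun h ↦ hrigid ((Hbold_eq_self_iff hℓ pow_mem_U1v).mp h.symm),
    fun T hpow hneg hTU hne hT ↦ hne (hTU.antisymm ?_)⟩
  exact U1v_le_of_Hbold_le_unitPow hℓ hdiv hpow hneg (hT.trans hH.le)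

theorem rigidPair_Hbold (hℓ : ℓ.Prime) (hpow : ∀ u : Kˣ, u ^ ℓ ∈ T) (hneg : -1 ∈ T)
    (hT : T ≠ Hbold T) : RigidPair ℓ T (Hbold T) where
  prime := hℓ
  pow_mem := hpow
  neg_one_mem := hneg
  le := le_Hbold
  mem_of_nonrigidAt _ hx := hx.mem_Hbold hℓ hpow
  exists_nonrigidAt := by
    by_contra! h
    exact hT ((Hbold_eq_self_iff hℓ hpow).mpr ((isRigid_iff hℓ hpow).mpr h)).symm

theorem RigidPair.unitPow_valuationSubring_le (R : RigidPair ℓ T H) :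
    unitPow ℓ R.valuationSubring ≤ H := by
  refine sup_le R.unitGroup_valuationSubring_le ?_
  rintro _ ⟨u, rfl⟩
  exact R.le (R.pow_mem u)

-- If `d` had value greater than `1`, it would lie outside `O⁺`, so `s` and `(d * s)⁻¹` would lie in
-- `O⁻` for some `s ≠ 0`. Then `s⁻¹` has value between `1` and that of `d`, whence `s ∈ D ≤ H`.
theorem RigidPair.valuation_le_one_of_mem (R : RigidPair ℓ T H) {D : Subgroup Kˣ}
    (hD : IsConvexSubgroup R.valuationSubring D) (hDH : D ≤ H) {d : Kˣ} (hd : d ∈ D) :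
    R.valuationSubring.valuation d ≤ 1 := by
  by_contra hd₁
  rw [ValuationSubring.valuation_le_one_iff] at hd₁
  obtain ⟨s, hs, hs₀, hds⟩ :=
    R.exists_inv_mul_mem_OMinus (coe_mem_ofUnits_iff.mpr (hDH hd)) fun h ↦ hd₁ (.inr h)
  have hvs : R.valuationSubring.valuation s ≤ 1 :=
    (ValuationSubring.valuation_le_one_iff _ _).mpr (.inl hs)
  have hvs₀ := R.valuationSubring.valuation.pos_iff.mpr hs₀
  have hvd₀ := R.valuationSubring.valuation.pos_iff.mpr d.ne_zero
  have hvds : (R.valuationSubring.valuation d * R.valuationSubring.valuation s)⁻¹ ≤ 1 := by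
    rw [← map_mul, ← map_inv₀]
    exact (ValuationSubring.valuation_le_one_iff _ _).mpr (.inl hds)
  have hsD : (Units.mk0 s hs₀)⁻¹ ∈ D := by
    refine hD.mem_of_le d hd _ ?_ ?_ <;>
      rw [Units.val_inv_eq_inv_val, Units.val_mk0, map_inv₀]
    · exact (one_le_inv₀ hvs₀).mpr hvs
    · exact (inv_le_iff_one_le_mul₀ hvs₀).mpr ((inv_le_one₀ (mul_pos hvd₀ hvs₀)).mp hvds)
  exact hs.1 ((mk0_mem_iff hs₀).mp (hDH (inv_mem_iff.mp hsD)))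

theorem RigidPair.noLDivConvex (R : RigidPair ℓ T H) : NoLDivConvex ℓ R.valuationSubring := by
  refine (noLDivConvex_iff R.prime.ne_zero).mpr fun D hD hDV ↦
    le_antisymm (fun d hd ↦ ?_) hD.unitGroup_le
  have hDH := hDV.trans R.unitPow_valuationSubring_le
  have hd' := R.valuation_le_one_of_mem hD hDH (inv_mem hd)
  rw [Units.val_inv_eq_inv_val, map_inv₀,
    inv_le_one₀ (R.valuationSubring.valuation.pos_iff.mpr d.ne_zero)] at hd'
  exact (ValuationSubring.mem_unitGroup_iff _ _).mpr
    ((R.valuation_le_one_of_mem hD hDH hd).antisymm hd')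

theorem RigidPair.U1v_valuationSubring_le (R : RigidPair ℓ T H) : U1v ℓ R.valuationSubring ≤ T :=
  U1v_le R.pow_mem R.neg_one_mem fun _ ↦ R.one_sub_mem_of_valuation_lt_one

theorem exists_mem_VK_U1v_eq (hℓ : ℓ.Prime) (hT : T ∈ TK K ℓ) : ∃ O ∈ VK K ℓ, U1v ℓ O = T := by
  obtain ⟨hpow, hneg, hne, hmin⟩ := hT
  let R := rigidPair_Hbold hℓ hpow hneg hne
  have hU : U1v ℓ R.valuationSubring = T := by
    by_contra h
    exact hmin _ pow_mem_U1v neg_one_mem_U1v R.U1v_valuationSubring_le h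
      ((Hbold_U1v_le hℓ).trans R.unitPow_valuationSubring_le)
  refine ⟨R.valuationSubring, (mem_VK_iff hℓ).mpr ⟨R.noLDivConvex, ?_, ?_⟩, hU⟩
  · rw [hU, ← Hbold_eq_self_iff hℓ hpow]
    exact hne.symm
  · rw [Hbold_U1v_eq_unitPow_iff hℓ, hU]
    exact R.unitGroup_valuationSubring_le

end Main

/-- `v ↦ 𝔘_v^1` is a bijection from `𝒱_K` onto `𝒯_K` (in particular
`𝔘_v^1 ∈ 𝒯_K` for every `v ∈ 𝒱_K`). -/
theorem stmt_11 {K : Type*} [Field K] (ℓ : ℕ) (hℓ : ℓ.Prime) :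
    Set.BijOn (fun O : ValuationSubring K => U1v ℓ O) (VK K ℓ) (TK K ℓ) :=
  ⟨fun _ ↦ U1v_mem_TK hℓ, injOn_U1v_VK hℓ, fun _ ↦ exists_mem_VK_U1v_eq hℓ⟩
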